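/- In Z, for all distinct x, y ∈ I: the pair (x,y) is splitable if and only if {x,y} = {id_{n,0}, id_{n,k}} for some n ∈ ℕ and 1 ≤ k ≤ n. Moreover, for 1 ≤ k ≤ n, the elements of S with domain id_{n,0} and range id_{n,k} are exactly r_{n,k} and w_{n,0,n,k}, and for distinct x, y ∈ I with {x,y} not of the form {id_{n,0}, id_{n,k}} (1 ≤ k ≤ n), there is exactly one element of S with domain x and range y. -/

import Mathlib

open FirstOrder FirstOrder.Language

/-- Relation symbols of the language of atom structures: a unary `I`,
a binary `C` and a ternary `P`. -/
inductive AtomRel : ℕ → Type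
  | I : AtomRel 1
  | C : AtomRel 2
  | P : AtomRel 3

/-- The first-order language with one ternary relation symbol `P`, one binary
relation symbol `C` and one unary relation symbol `I`. -/
def atomLang : FirstOrder.Language :=
  ⟨fun _ => Empty, AtomRel⟩

/-- Function symbols of the language of the term algebras: a constant `1'`,
unary symbols `−` (complement) and `⁻` (converse), binary symbols `+` and `;`. -/
inductive AlgFun : ℕ → Type
  | one : AlgFun 0
  | compl : AlgFun 1
  | conv : AlgFun 1
  | add : AlgFun 2
  | comp : AlgFun 2

/-- The first-order language with binary operations `+` and `;`, unary
operations `−` and `⁻`, and a constant `1'`. -/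
def algLang : FirstOrder.Language :=
  ⟨AlgFun, fun _ => Empty⟩

section Generic

variable {M : Type} [atomLang.Structure M]

/-- The interpretation of the unary relation symbol `I`. -/
def mI (a : M) : Prop := Structure.RelMap (L := atomLang) (AtomRel.I : atomLang.Relations 1) ![a]

/-- The interpretation of the binary relation symbol `C`. -/
def mC (a b : M) : Prop := Structure.RelMap (L := atomLang) (AtomRel.C : atomLang.Relations 2) ![a, b]

/-- The interpretation of the ternary relation symbol `P`. -/
def mP (a b c : M) : Prop := Structure.RelMap (L := atomLang) (AtomRel.P : atomLang.Relations 3) ![a, b, c]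

/-- `X ; Y = {u : ∃ x ∈ X, y ∈ Y, P(x,y,u)}`. -/
def sComp (X Y : Set M) : Set M := {u | ∃ x ∈ X, ∃ y ∈ Y, mP x y u}

/-- `X⁻ = {u : ∃ x ∈ X, C(x,u)}`. -/
def sConv (X : Set M) : Set M := {u | ∃ x ∈ X, mC x u}

/-- The set of elements satisfying `I`. -/
def idSet (M : Type) [atomLang.Structure M] : Set M := {a | mI a}

end Generic

/-- Membership in the term algebra: the smallest collection of subsets of `M`
containing all singletons and the set `I`, closed under binary union,
complementation, `;` and `⁻`. -/
inductive InTA (M : Type) [atomLang.Structure M] : Set M → Prop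
  | sing (a : M) : InTA M {a}
  | idset : InTA M (idSet M)
  | union {X Y : Set M} : InTA M X → InTA M Y → InTA M (X ∪ Y)
  | compl {X : Set M} : InTA M X → InTA M Xᶜ
  | comp {X Y : Set M} : InTA M X → InTA M Y → InTA M (sComp X Y)
  | conv {X : Set M} : InTA M X → InTA M (sConv X)

/-- The term algebra of an atom structure, as a type. -/
def TermAlg (M : Type) [atomLang.Structure M] : Type := {X : Set M // InTA M X}

/-- The term algebra as a structure in the language `algLang`:
`+` is union, `−` is complement, `;` and `⁻` are the operations defined from
`P` and `C`, and `1'` is the set `I`. -/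
instance termAlgStructure (M : Type) [atomLang.Structure M] :
    algLang.Structure (TermAlg M) where
  funMap := fun {_} f v =>
    match f with
    | .one => ⟨idSet M, InTA.idset⟩
    | .compl => ⟨(v 0).1ᶜ, InTA.compl (v 0).2⟩
    | .conv => ⟨sConv (v 0).1, InTA.conv (v 0).2⟩
    | .add => ⟨(v 0).1 ∪ (v 1).1, InTA.union (v 0).2 (v 1).2⟩
    | .comp => ⟨sComp (v 0).1 (v 1).1, InTA.comp (v 0).2 (v 1).2⟩
  RelMap := fun {_} r _ => r.elim

/-- `a` goes from `x` to `y` when `P(x,a,a)` and `P(a,y,a)`. -/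
def goes {M : Type} [atomLang.Structure M] (a x y : M) : Prop := mP x a a ∧ mP a y a

/-- `X` splits the pair `(x,y)` when some `a ∈ X` and some `b ∉ X` both go
from `x` to `y`. -/
def SplitsG {M : Type} [atomLang.Structure M] (X : Set M) (x y : M) : Prop :=
  ∃ a ∈ X, ∃ b ∉ X, goes a x y ∧ goes b x y

/-- The pair `(x,y)` is splitable when `x ≠ y` and at least two distinct
elements go from `x` to `y`. -/
def SplitableG {M : Type} [atomLang.Structure M] (x y : M) : Prop :=
  x ≠ y ∧ ∃ a b : M, a ≠ b ∧ goes a x y ∧ goes b x y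

/-- Converse of a binary relation, as a set of pairs. -/
def relConv {U : Type} (R : Set (U × U)) : Set (U × U) := {p | (p.2, p.1) ∈ R}

/-- Composition of binary relations, as sets of pairs. -/
def relComp {U : Type} (R T : Set (U × U)) : Set (U × U) :=
  {p | ∃ w, (p.1, w) ∈ R ∧ (w, p.2) ∈ T}

/-- An atom structure is completely representable. -/
def CompRep (M : Type) [atomLang.Structure M] : Prop :=
  ∃ (U : Type) (rep : M → Set (U × U)),
    (∀ a : M, (rep a).Nonempty) ∧
    (∀ a b : M, a ≠ b → Disjoint (rep a) (rep b)) ∧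
    (⋃ a : M, rep a) = Set.univ ∧
    (∀ a : M, (mI a ↔ rep a ⊆ Set.diagonal U) ∧
      ((rep a ⊆ Set.diagonal U) ↔ (rep a ∩ Set.diagonal U).Nonempty)) ∧
    (∀ a b : M, (mC a b ↔ rep b = relConv (rep a)) ∧
      ((rep b = relConv (rep a)) ↔ (rep b ∩ relConv (rep a)).Nonempty)) ∧
    (∀ a b c : M, (mP a b c ↔ rep c ⊆ relComp (rep a) (rep b)) ∧
      ((rep c ⊆ relComp (rep a) (rep b)) ↔ (rep c ∩ relComp (rep a) (rep b)).Nonempty))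
/-- The atoms of the atom structure `Z`: identity atoms `id n i` (`i ≤ n`),
split atoms `r n k` and their converses `rc n k` (`1 ≤ k ≤ n`), and
atoms `w n i m j` (`i ≤ n`, `j ≤ m`).  Distinct constructor applications give
pairwise distinct elements. -/
inductive Atom : Type
  | id : (n i : ℕ) → i ≤ n → Atom
  | r : (n k : ℕ) → 1 ≤ k → k ≤ n → Atom
  | rc : (n k : ℕ) → 1 ≤ k → k ≤ n → Atom
  | w : (n i m j : ℕ) → i ≤ n → j ≤ m → Atom

/-- The domain function of `Z`. -/
def Atom.dom : Atom → Atom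
  | .id n i h => .id n i h
  | .r n _ _ _ => .id n 0 (Nat.zero_le n)
  | .rc n k _ h2 => .id n k h2
  | .w n i _ _ hi _ => .id n i hi

/-- The range function of `Z`. -/
def Atom.rg : Atom → Atom
  | .id n i h => .id n i h
  | .r n k _ h2 => .id n k h2
  | .rc n _ _ _ => .id n 0 (Nat.zero_le n)
  | .w _ _ m j _ hj => .id m j hj

/-- Membership in the set `I` of identity atoms of `Z`. -/
def Atom.isId : Atom → Prop
  | .id _ _ _ => True
  | _ => False

/-- The converse function on atoms of `Z`. -/
def Atom.cnv : Atom → Atom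
  | .id n i h => .id n i h
  | .r n k h1 h2 => .rc n k h1 h2
  | .rc n k h1 h2 => .r n k h1 h2
  | .w n i m j hi hj => .w m j n i hj hi

/-- The binary relation `C` of `Z`: it consists of the pairs `(x,x)` for
`x ∈ I`, `(r n k, rc n k)`, `(rc n k, r n k)` and `(w n i m j, w m j n i)`,
i.e. exactly the pairs `(a, cnv a)`. -/
def Crel (a b : Atom) : Prop := b = Atom.cnv a

/-- The ternary relation `P` of `Z`: the triples `(dom a, a, a)` and
`(a, rg a, a)` for `a ∈ S`, the triples `(a, b, dom a)` for `(a,b) ∈ C`, and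
the triples `(a,b,c)` of non-identity atoms with `dom a = dom c`,
`rg a = dom b`, `rg b = rg c`. -/
def Prel (a b c : Atom) : Prop :=
  (a = b.dom ∧ c = b) ∨
  (b = a.rg ∧ c = a) ∨
  (Crel a b ∧ c = a.dom) ∨
  (¬ a.isId ∧ ¬ b.isId ∧ ¬ c.isId ∧ a.dom = c.dom ∧ a.rg = b.dom ∧ b.rg = c.rg)

/-- `Z` as a structure for the language `atomLang`. -/
instance atomStructureZ : atomLang.Structure Atom where
  funMap := fun {_} f _ => f.elim
  RelMap := fun {_} r v =>
    match r with
    | AtomRel.I => (v 0).isId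
    | AtomRel.C => Crel (v 0) (v 1)
    | AtomRel.P => Prel (v 0) (v 1) (v 2)

/-- `X ⊆ S` splits the pair `(x,y)` if there are `a ∈ X` and `b ∉ X` with
`dom a = dom b = x` and `rg a = rg b = y`. -/
def Splits (X : Set Atom) (x y : Atom) : Prop :=
  ∃ a ∈ X, ∃ b ∉ X, a.dom = x ∧ a.rg = y ∧ b.dom = x ∧ b.rg = y

/-- The pair `(x,y)` is splitable if `x ≠ y` and there are two distinct
elements `a ≠ b` of `S` with `dom a = dom b = x` and `rg a = rg b = y`. -/
def Splitable (x y : Atom) : Prop :=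
  x ≠ y ∧ ∃ a b : Atom, a ≠ b ∧ a.dom = x ∧ a.rg = y ∧ b.dom = x ∧ b.rg = y

/-! From any identity atom to any other runs exactly one atom `w n i m j`, and the only other atoms
with distinct endpoints are the `r n k` and their converses `rc n k`, which join `id n 0` to
`id n k`. -/

namespace Atom

/-- The unordered pairs `{id n 0, id n k}` with `1 ≤ k ≤ n`, seen as the edges of disjoint stars
with centres `id n 0`. These are the pairs joined by the atoms `r n k` and `rc n k`. -/
def IsStarEdge (x y : Atom) : Prop :=
  ∃ (n k : ℕ) (_ : 1 ≤ k) (h2 : k ≤ n),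
    ({x, y} : Set Atom) = {id n 0 (Nat.zero_le n), id n k h2}

variable {x y a : Atom} {n i m j k : ℕ}

theorem IsStarEdge.symm (h : IsStarEdge x y) : IsStarEdge y x := by
  rwa [IsStarEdge, Set.pair_comm]

theorem isStarEdge_id_zero_id (h1 : 1 ≤ k) (h2 : k ≤ n) :
    IsStarEdge (id n 0 (Nat.zero_le n)) (id n k h2) :=
  ⟨n, k, h1, h2, rfl⟩

theorem isId_dom (a : Atom) : a.dom.isId := by
  cases a <;> trivial

theorem isId_rg (a : Atom) : a.rg.isId := by
  cases a <;> trivial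

theorem dom_cnv (a : Atom) : a.cnv.dom = a.rg := by
  cases a <;> rfl

theorem rg_cnv (a : Atom) : a.cnv.rg = a.dom := by
  cases a <;> rfl

theorem cnv_involutive : Function.Involutive cnv := by
  rintro (_ | _ | _ | _) <;> rfl

theorem exists_eq_id_of_isId (hx : x.isId) : ∃ (n i : ℕ) (hi : i ≤ n), x = id n i hi := by
  cases x with
  | id n i hi => exact ⟨n, i, hi, rfl⟩
  | r | rc | w => exact hx.elim

theorem eq_w_of_dom_eq_of_rg_eq {hi : i ≤ n} {hj : j ≤ m}
    (hne : id n i hi ≠ id m j hj) (hstar : ¬ IsStarEdge (id n i hi) (id m j hj))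
    (hdom : a.dom = id n i hi) (hrg : a.rg = id m j hj) :
    a = w n i m j hi hj := by
  cases a with
  | id => exact absurd (hdom.symm.trans hrg) hne
  | r p q h1 h2 =>
    have hedge : IsStarEdge (r p q h1 h2).dom (r p q h1 h2).rg := isStarEdge_id_zero_id h1 h2
    exact absurd (hdom ▸ hrg ▸ hedge) hstar
  | rc p q h1 h2 =>
    have hedge : IsStarEdge (rc p q h1 h2).dom (rc p q h1 h2).rg :=
      (isStarEdge_id_zero_id h1 h2).symm
    exact absurd (hdom ▸ hrg ▸ hedge) hstar
  | w =>
    cases hdom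
    cases hrg
    rfl

theorem existsUnique_dom_eq_and_rg_eq (hx : x.isId) (hy : y.isId) (hne : x ≠ y)
    (hstar : ¬ IsStarEdge x y) : ∃! a : Atom, a.dom = x ∧ a.rg = y := by
  obtain ⟨n, i, hi, rfl⟩ := exists_eq_id_of_isId hx
  obtain ⟨m, j, hj, rfl⟩ := exists_eq_id_of_isId hy
  exact ⟨w n i m j hi hj, ⟨rfl, rfl⟩, fun _ ⟨hdom, hrg⟩ =>
    eq_w_of_dom_eq_of_rg_eq hne hstar hdom hrg⟩

theorem dom_eq_id_zero_and_rg_eq_id_iff (h1 : 1 ≤ k) (h2 : k ≤ n) :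
    (a.dom = id n 0 (Nat.zero_le n) ∧ a.rg = id n k h2) ↔
      (a = r n k h1 h2 ∨ a = w n 0 n k (Nat.zero_le n) h2) := by
  constructor
  · rintro ⟨hdom, hrg⟩
    cases a with
    | id | rc =>
      simp only [dom, rg, id.injEq] at hdom hrg
      omega
    | r =>
      cases hrg
      exact .inl rfl
    | w =>
      cases hdom
      cases hrg
      exact .inr rfl
  · rintro (rfl | rfl) <;> exact ⟨rfl, rfl⟩

end Atom

section Splitable

open Atom

variable {x y : Atom}

theorem Splitable.symm (h : Splitable x y) : Splitable y x := by
  obtain ⟨hne, a, b, hab, hadom, harg, hbdom, hbrg⟩ := h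
  exact ⟨hne.symm, a.cnv, b.cnv, cnv_involutive.injective.ne hab,
    a.dom_cnv.trans harg, a.rg_cnv.trans hadom, b.dom_cnv.trans hbrg, b.rg_cnv.trans hbdom⟩

theorem splitable_id_zero_id {n k : ℕ} (h1 : 1 ≤ k) (h2 : k ≤ n) :
    Splitable (.id n 0 (Nat.zero_le n)) (.id n k h2) := by
  have hne : Atom.id n 0 (Nat.zero_le n) ≠ .id n k h2 := by
    rw [Ne, Atom.id.injEq]
    omega
  exact ⟨hne, r n k h1 h2, w n 0 n k (Nat.zero_le n) h2, nofun, rfl, rfl, rfl, rfl⟩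

theorem splitable_iff_isStarEdge : Splitable x y ↔ IsStarEdge x y := by
  constructor
  · rintro ⟨hne, a, b, hab, rfl, rfl, hbdom, hbrg⟩
    by_contra hstar
    exact hab ((existsUnique_dom_eq_and_rg_eq a.isId_dom a.isId_rg hne hstar).unique
      ⟨rfl, rfl⟩ ⟨hbdom, hbrg⟩)
  · rintro ⟨n, k, h1, h2, hpair⟩
    rcases Set.pair_eq_pair_iff.mp hpair with ⟨rfl, rfl⟩ | ⟨rfl, rfl⟩
    · exact splitable_id_zero_id h1 h2
    · exact (splitable_id_zero_id h1 h2).symm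

end Splitable

/-- In `Z`, for all distinct `x, y ∈ I`: the pair `(x,y)` is splitable iff
`{x,y} = {id n 0, id n k}` for some `n` and `1 ≤ k ≤ n`.  Moreover, for
`1 ≤ k ≤ n`, the elements of `S` with domain `id n 0` and range `id n k` are
exactly `r n k` and `w n 0 n k`; and for distinct `x, y ∈ I` with `{x,y}` not
of this form, there is exactly one element of `S` with domain `x` and
range `y`. -/
theorem stmt_17 :
    (∀ x y : Atom, x.isId → y.isId → x ≠ y →
      (Splitable x y ↔ ∃ (n k : ℕ) (_ : 1 ≤ k) (h2 : k ≤ n),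
        ({x, y} : Set Atom) = {Atom.id n 0 (Nat.zero_le n), Atom.id n k h2})) ∧
    (∀ (n k : ℕ) (h1 : 1 ≤ k) (h2 : k ≤ n), ∀ a : Atom,
      (a.dom = Atom.id n 0 (Nat.zero_le n) ∧ a.rg = Atom.id n k h2) ↔
        (a = Atom.r n k h1 h2 ∨ a = Atom.w n 0 n k (Nat.zero_le n) h2)) ∧
    (∀ x y : Atom, x.isId → y.isId → x ≠ y →
      (¬ ∃ (n k : ℕ) (_ : 1 ≤ k) (h2 : k ≤ n),
        ({x, y} : Set Atom) = {Atom.id n 0 (Nat.zero_le n), Atom.id n k h2}) →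
      ∃! a : Atom, a.dom = x ∧ a.rg = y) :=
  ⟨fun _ _ _ _ _ => splitable_iff_isStarEdge,
    fun _ _ h1 h2 _ => Atom.dom_eq_id_zero_and_rg_eq_id_iff h1 h2,
    fun _ _ => Atom.existsUnique_dom_eq_and_rg_eq⟩
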